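/- In the PARTITION-based gadget instance for 2PAA(c): if the multiset w_1, …, w_n with total weight W admits a partition into two subsets U_1, U_2 with |U_1| = |U_2| = n/2 and Σ_{i∈U_1} w_i = Σ_{i∈U_2} w_i = W/2, then the constructed Second-Price Ad Auctions instance admits a feasible second-price allocation of total profit at least cW(n^5 + n + 2); conversely, if the instance admits an allocation of value at least cW(n^3 + cn^2 + n + 2), then such a balanced partition of w_1, …, w_n exists. -/

import Mathlib

noncomputable def budgetRem (m : ℕ) {V : Type*} [DecidableEq V]
    (b : Fin m → V → ℝ) (B : V → ℝ) (alloc : Fin m → Option (V × V)) : ℕ → V → ℝ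
  | 0 => B
  | t + 1 => fun v =>
    if h : t < m then
      match alloc ⟨t, h⟩ with
      | some p =>
        if v = p.1 then
          budgetRem m b B alloc t v - min (b ⟨t, h⟩ p.2) (budgetRem m b B alloc t p.2)
        else budgetRem m b B alloc t v
      | none => budgetRem m b B alloc t v
    else budgetRem m b B alloc t v

noncomputable def price2PAA (m : ℕ) {V : Type*} [DecidableEq V]
    (b : Fin m → V → ℝ) (B : V → ℝ) (alloc : Fin m → Option (V × V)) (t : Fin m) : ℝ :=
  match alloc t with
  | some p => min (b t p.2) (budgetRem m b B alloc t.val p.2)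
  | none => 0

noncomputable def value2PAA (m : ℕ) {V : Type*} [DecidableEq V]
    (b : Fin m → V → ℝ) (B : V → ℝ) (alloc : Fin m → Option (V × V)) : ℝ :=
  ∑ t : Fin m, price2PAA m b B alloc t

def Feasible2PAA (m : ℕ) {V : Type*} [DecidableEq V]
    (b : Fin m → V → ℝ) (B : V → ℝ) (alloc : Fin m → Option (V × V)) : Prop :=
  ∀ (t : Fin m) (p : V × V), alloc t = some p →
    p.1 ≠ p.2 ∧
    min (b t p.2) (budgetRem m b B alloc t.val p.2) ≤
      min (b t p.1) (budgetRem m b B alloc t.val p.1)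

/-- Bidders of the PARTITION gadget: `Sum.inl 0 = a`, `Sum.inl 1 = d₁`, `Sum.inl 2 = d₂`,
`Sum.inl 3 = f`, and `Sum.inr i = hᵢ` for `i < n²`. -/
abbrev GadgetV (n : ℕ) := Fin 4 ⊕ Fin (n ^ 2)

/-- Budgets: `a, d₁, d₂ ↦ cW(1 + n/2)`, `f ↦ cW(n³ + 1)`, `hᵢ ↦ cWn³`. -/
noncomputable def gadgetBudget (c n : ℕ) (W : ℝ) : GadgetV n → ℝ
  | Sum.inl i => if i.val ≤ 2 then c * W * (1 + (n : ℝ) / 2) else c * W * ((n : ℝ) ^ 3 + 1)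
  | Sum.inr _ => c * W * (n : ℝ) ^ 3

/-- Bids of the PARTITION gadget.  Keywords arrive in the order
`c_1, …, c_n, e_1, e_2, g_{1,1}, …, g_{1,c}, …, g_{n²,1}, …, g_{n²,c}`:
keyword index `t < n` is `c_{t+1}` (bids `c(w_t + W)` from `a, d₁, d₂`);
`t = n` is `e₁` (bid `cW` from `d₁`, `cW/2` from `f`); `t = n + 1` is `e₂`
(bid `cW` from `d₂`, `cW/2` from `f`); and `t ≥ n + 2` is `g_{i,k}` with
`i = (t − (n+2))/c` (bid `W(n³+1)` from `f` and `Wn³` from `hᵢ`). -/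
noncomputable def gadgetBid (c n : ℕ) (w : Fin n → ℕ) (W : ℝ) :
    Fin (n + 2 + c * n ^ 2) → GadgetV n → ℝ := fun t v =>
  if ht : t.val < n then
    match v with
    | Sum.inl i => if i.val ≤ 2 then c * ((w ⟨t.val, ht⟩ : ℝ) + W) else 0
    | Sum.inr _ => 0
  else if t.val = n then
    match v with
    | Sum.inl i => if i.val = 1 then c * W else if i.val = 3 then c * W / 2 else 0
    | Sum.inr _ => 0
  else if t.val = n + 1 then
    match v with
    | Sum.inl i => if i.val = 2 then c * W else if i.val = 3 then c * W / 2 else 0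
    | Sum.inr _ => 0
  else
    match v with
    | Sum.inl i => if i.val = 3 then W * ((n : ℝ) ^ 3 + 1) else 0
    | Sum.inr j => if j.val = (t.val - (n + 2)) / c then W * (n : ℝ) ^ 3 else 0

/-! Selling every `c_i` and `e_j` gives at most `cW(n + 2)`. As long as `f` and the `h_i` are
rich, a keyword `g_{i,k}` sells for at most `Wn³`, and only to `f`, whose bid beats that of `h_i`;
once `f` is down to `cW`, every later `g_{i,k}` sells for at most `cW`. If `f` reaches the
`g`-keywords with more than `cWn³`, it therefore buys at most `c` of them at the high price before
its budget collapses, and the value stays below `cW(n³ + cn² + n + 2)`. Hence `f` must first spend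
its surplus `cW`, that is, buy both `e_j` at its full bid `cW/2`. The price of `e_j` is set by
`d_j`, whose bid is `cW`, so `d_j` must be down to `cW/2`: it has spent `cW(n + 1)/2`, half of the
total of the prices `c(w_i + W)`, on keywords `c_i`. An even split of `∑ (w_i + W)` also splits
the cardinality evenly, and hence the weight: `n` is even, so two unequal cardinalities differ by
at least `2`, while the two weights differ by at most `W`.

Conversely, from a balanced partition, `d_1` and `d_2` buy the two halves of the `c_i` and end
with `cW/2` each; `f` then buys `e_1`, `e_2` and `c - 1` further keywords `g_{1,k}`, after which
it has exactly `Wn³` left and sets that price for all the remaining `g_{i,k}`, each bought by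
`h_i`.
-/

namespace SecondPrice

open Finset

variable {m : ℕ} {V : Type*} [DecidableEq V]
  {b : Fin m → V → ℝ} {B : V → ℝ} {alloc : Fin m → Option (V × V)}

/-- The payment of bidder `v` for keyword `t`: the price of `t` if `v` wins it, and `0` otherwise.
It is what `budgetRem` deducts from the budget of `v` at step `t`. -/
noncomputable def payment (m : ℕ) {V : Type*} [DecidableEq V] (b : Fin m → V → ℝ) (B : V → ℝ)
    (alloc : Fin m → Option (V × V)) (v : V) (t : Fin m) : ℝ :=
  if (alloc t).map Prod.fst = some v then price2PAA m b B alloc t else 0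

lemma price_of_eq_some {t : Fin m} {p : V × V} (hp : alloc t = some p) :
    price2PAA m b B alloc t = min (b t p.2) (budgetRem m b B alloc t p.2) := by
  simp only [price2PAA, hp]

lemma payment_of_eq_some {t : Fin m} {p : V × V} (hp : alloc t = some p) (v : V) :
    payment m b B alloc v t = if p.1 = v then price2PAA m b B alloc t else 0 := by
  simp only [payment, hp, Option.map_some, Option.some.injEq]

lemma budgetRem_succ (t : Fin m) (v : V) :
    budgetRem m b B alloc (t + 1) v = budgetRem m b B alloc t v - payment m b B alloc v t := by
  cases hp : alloc t with
  | none => simp [budgetRem, payment, hp]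
  | some p =>
    rw [payment_of_eq_some hp, price_of_eq_some hp]
    by_cases hv : v = p.1 <;> simp [budgetRem, hp, hv, eq_comm]

lemma sum_filter_val_lt_succ {M : Type*} [AddCommMonoid M] (f : Fin m → M) (t : Fin m) :
    ∑ s : Fin m with s.val < t.val + 1, f s = ∑ s : Fin m with s.val < t.val, f s + f t := by
  have hinsert : ({s : Fin m | s.val < t.val + 1} : Finset (Fin m)) =
      insert t ({s : Fin m | s.val < t.val} : Finset (Fin m)) := by
    ext s
    simp only [mem_filter_univ, mem_insert, Fin.ext_iff]
    omega
  rw [hinsert, sum_insert (by simp), add_comm]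

lemma budgetRem_eq_sub_sum (k : ℕ) (v : V) :
    budgetRem m b B alloc k v = B v - ∑ s : Fin m with s.val < k, payment m b B alloc v s := by
  induction k with
  | zero => simp [budgetRem]
  | succ k ih =>
    by_cases hk : k < m
    · rw [budgetRem_succ ⟨k, hk⟩, sum_filter_val_lt_succ _ ⟨k, hk⟩, ih, sub_sub]
    · have hfilter : ∀ s : Fin m, s.val < k + 1 ↔ s.val < k := fun s => by omega
      simp only [budgetRem, hk, dite_false, ih, hfilter]

lemma budgetRem_nonneg (hB : ∀ v, 0 ≤ B v) (hf : Feasible2PAA m b B alloc) (k : ℕ) (v : V) :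
    0 ≤ budgetRem m b B alloc k v := by
  induction k generalizing v with
  | zero => exact hB v
  | succ k ih =>
    by_cases hk : k < m
    · rw [budgetRem_succ ⟨k, hk⟩, sub_nonneg]
      cases hp : alloc ⟨k, hk⟩ with
      | none => simpa [payment, hp] using ih v
      | some p =>
        rw [payment_of_eq_some hp, price_of_eq_some hp]
        split_ifs with hv
        · exact hv ▸ (hf _ p hp).2.trans (min_le_right _ _)
        · exact ih v
    · simpa only [budgetRem, hk, dite_false] using ih v

lemma price_nonneg (hb : ∀ t v, 0 ≤ b t v) (hB : ∀ v, 0 ≤ B v) (hf : Feasible2PAA m b B alloc)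
    (t : Fin m) : 0 ≤ price2PAA m b B alloc t := by
  cases hp : alloc t with
  | none => simp [price2PAA, hp]
  | some p => rw [price_of_eq_some hp]; exact le_min (hb _ _) (budgetRem_nonneg hB hf _ _)

lemma exists_alloc_of_price_pos (hf : Feasible2PAA m b B alloc) {t : Fin m}
    (ht : 0 < price2PAA m b B alloc t) :
    ∃ u v, alloc t = some (u, v) ∧ u ≠ v ∧
      price2PAA m b B alloc t ≤ min (b t u) (budgetRem m b B alloc t u) ∧
      price2PAA m b B alloc t = min (b t v) (budgetRem m b B alloc t v) := by
  cases hp : alloc t with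
  | none => simp [price2PAA, hp] at ht
  | some p =>
    have hprice := price_of_eq_some (b := b) (B := B) hp
    exact ⟨p.1, p.2, rfl, (hf t p hp).1, hprice ▸ (hf t p hp).2, hprice⟩

lemma alloc_eq_or_eq_swap_of_price_pos (hf : Feasible2PAA m b B alloc) {t : Fin m} {u v : V}
    (hbid : ∀ x, x ≠ u → x ≠ v → b t x = 0) (ht : 0 < price2PAA m b B alloc t) :
    alloc t = some (u, v) ∨ alloc t = some (v, u) := by
  obtain ⟨x, y, hxy, hne, hx, hy⟩ := exists_alloc_of_price_pos hf ht
  have eq_or_eq {z : V} (hz : price2PAA m b B alloc t ≤ min (b t z) (budgetRem m b B alloc t z)) :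
      z = u ∨ z = v := by
    by_contra! hzuv
    exact (ht.trans_le (hz.trans (min_le_left _ _))).ne' (hbid z hzuv.1 hzuv.2)
  rcases eq_or_eq hx with rfl | rfl <;> rcases eq_or_eq hy.le with rfl | rfl
  exacts [absurd rfl hne, Or.inl hxy, Or.inr hxy, absurd rfl hne]

lemma price_le_of_forall_ne_bid_le (hf : Feasible2PAA m b B alloc) {t : Fin m} {x : ℝ}
    (hx : 0 ≤ x) (u : V) (hbid : ∀ v, v ≠ u → b t v ≤ x) : price2PAA m b B alloc t ≤ x := by
  by_contra! hlt
  obtain ⟨v₁, v₂, -, hne, h₁, h₂⟩ := exists_alloc_of_price_pos hf (hx.trans_lt hlt)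
  by_cases hv₁ : v₁ = u
  · have hv₂ : v₂ ≠ u := fun h => hne (hv₁.trans h.symm)
    exact hlt.not_ge (h₂.le.trans ((min_le_left _ _).trans (hbid v₂ hv₂)))
  · exact hlt.not_ge (h₁.trans ((min_le_left _ _).trans (hbid v₁ hv₁)))

lemma payment_nonneg (hb : ∀ t v, 0 ≤ b t v) (hB : ∀ v, 0 ≤ B v) (hf : Feasible2PAA m b B alloc)
    (v : V) (t : Fin m) : 0 ≤ payment m b B alloc v t := by
  unfold payment
  split_ifs
  exacts [price_nonneg hb hB hf t, le_rfl]

lemma payment_le_price (hb : ∀ t v, 0 ≤ b t v) (hB : ∀ v, 0 ≤ B v)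
    (hf : Feasible2PAA m b B alloc) (v : V) (t : Fin m) :
    payment m b B alloc v t ≤ price2PAA m b B alloc t := by
  unfold payment
  split_ifs
  exacts [le_rfl, price_nonneg hb hB hf t]

lemma payment_le_bid (hb : ∀ t v, 0 ≤ b t v) (hf : Feasible2PAA m b B alloc) (v : V)
    (t : Fin m) : payment m b B alloc v t ≤ b t v := by
  cases hp : alloc t with
  | none => simpa [payment, hp] using hb t v
  | some p =>
    rw [payment_of_eq_some hp, price_of_eq_some hp]
    split_ifs with hv
    · exact hv ▸ (hf t p hp).2.trans (min_le_left _ _)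
    · exact hb t v

lemma payment_eq_zero_of_bid_eq_zero (hb : ∀ t v, 0 ≤ b t v) (hB : ∀ v, 0 ≤ B v)
    (hf : Feasible2PAA m b B alloc) {v : V} {t : Fin m} (hv : b t v = 0) :
    payment m b B alloc v t = 0 :=
  le_antisymm (hv ▸ payment_le_bid hb hf v t) (payment_nonneg hb hB hf v t)

lemma payment_eq_zero_of_price_eq_zero {t : Fin m} (ht : price2PAA m b B alloc t = 0) (v : V) :
    payment m b B alloc v t = 0 := by
  rw [payment, ht, ite_self]

lemma payment_eq_zero_or_payment_eq_zero {u v : V} (huv : u ≠ v) (t : Fin m) :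
    payment m b B alloc u t = 0 ∨ payment m b B alloc v t = 0 := by
  by_cases hu : (alloc t).map Prod.fst = some u
  · right; simp [payment, hu, huv]
  · left; simp [payment, hu]

lemma budgetRem_antitone (hb : ∀ t v, 0 ≤ b t v) (hB : ∀ v, 0 ≤ B v)
    (hf : Feasible2PAA m b B alloc) (v : V) : Antitone fun k => budgetRem m b B alloc k v := by
  refine antitone_nat_of_succ_le fun k => ?_
  by_cases hk : k < m
  · rw [budgetRem_succ ⟨k, hk⟩, sub_le_self_iff]
    exact payment_nonneg hb hB hf v _
  · simp only [budgetRem, hk, dite_false, le_rfl]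

lemma budgetRem_eq_of_forall_lt_price_eq {winner runnerUp : Fin m → V} {π : Fin m → ℝ} {t : Fin m}
    (hπ : ∀ s < t, price2PAA m b B (fun t => some (winner t, runnerUp t)) s = π s) (v : V) :
    budgetRem m b B (fun t => some (winner t, runnerUp t)) t v =
      B v - ∑ s with s < t ∧ winner s = v, π s := by
  rw [budgetRem_eq_sub_sum, ← filter_filter, sum_filter (fun s => winner s = v)]
  refine congrArg (B v - ·) (sum_congr rfl fun s hs => ?_)
  rw [payment_of_eq_some rfl, hπ s (mem_filter.1 hs).2]

lemma price_eq_of_plan {winner runnerUp : Fin m → V} {π : Fin m → ℝ}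
    (hπ : ∀ t, min (b t (runnerUp t))
      (B (runnerUp t) - ∑ s with s < t ∧ winner s = runnerUp t, π s) = π t) (t : Fin m) :
    price2PAA m b B (fun t => some (winner t, runnerUp t)) t = π t := by
  induction t using WellFoundedLT.induction with
  | ind t ih => rw [price_of_eq_some rfl, budgetRem_eq_of_forall_lt_price_eq ih, hπ t]

lemma feasible_of_plan {winner runnerUp : Fin m → V} {π : Fin m → ℝ}
    (hne : ∀ t, winner t ≠ runnerUp t) (hπ0 : ∀ t, 0 ≤ π t) (hbid : ∀ t, π t ≤ b t (winner t))
    (hbudget : ∀ v, ∑ s with winner s = v, π s ≤ B v)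
    (hπ : ∀ t, min (b t (runnerUp t))
      (B (runnerUp t) - ∑ s with s < t ∧ winner s = runnerUp t, π s) = π t) :
    Feasible2PAA m b B fun t => some (winner t, runnerUp t) := by
  rintro t p hp
  obtain rfl := Option.some.inj hp
  rw [← price_of_eq_some hp, price_eq_of_plan hπ t,
    budgetRem_eq_of_forall_lt_price_eq fun s _ => price_eq_of_plan hπ s]
  refine ⟨hne t, le_min (hbid t) (le_sub_iff_add_le'.2 (le_trans ?_ (hbudget (winner t))))⟩
  have hnotMem : t ∉ ({s | s < t ∧ winner s = winner t} : Finset (Fin m)) := by simp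
  rw [add_comm, ← sum_insert hnotMem]
  refine sum_le_sum_of_subset_of_nonneg (fun s hs => ?_) fun s _ _ => hπ0 s
  grind

end SecondPrice

section BalancedPartition

open Finset

variable {ι : Type*} [Fintype ι]

lemma exists_sum_eq_half_of_disjoint_support {a x y : ι → ℝ} (hx : ∀ i, x i ≤ a i)
    (hy : ∀ i, y i ≤ a i) (hxy : ∀ i, x i = 0 ∨ y i = 0)
    (hsumx : (∑ i, a i) / 2 ≤ ∑ i, x i) (hsumy : (∑ i, a i) / 2 ≤ ∑ i, y i) :
    ∃ S : Finset ι, ∑ i ∈ S, a i = (∑ i, a i) / 2 := by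
  classical
  let S : Finset ι := {i | x i ≠ 0}
  have hS : ∑ i, x i ≤ ∑ i ∈ S, a i := by
    rw [← sum_filter_ne_zero]
    exact sum_le_sum fun i _ => hx i
  have hSc : ∑ i, y i ≤ ∑ i ∈ Sᶜ, a i := by
    have hvanish : ∀ i ∈ S, y i = 0 := fun i hi => (hxy i).resolve_left (mem_filter.1 hi).2
    rw [← sum_add_sum_compl S y, sum_eq_zero hvanish, zero_add]
    exact sum_le_sum fun i _ => hy i
  exact ⟨S, by linarith [sum_add_sum_compl S a]⟩

lemma two_mul_card_eq_and_two_mul_sum_eq {w : ι → ℝ} {W : ℝ} (hw : ∀ i, 0 ≤ w i)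
    (hW : W = ∑ i, w i) (hpos : 0 < W) (heven : Even (Fintype.card ι)) {S : Finset ι}
    (hS : ∑ i ∈ S, (w i + W) = (∑ i, (w i + W)) / 2) :
    2 * #S = Fintype.card ι ∧ 2 * ∑ i ∈ S, w i = W := by
  obtain ⟨r, hr⟩ := heven
  have hr' : (Fintype.card ι : ℝ) = r + r := by exact_mod_cast hr
  have hsum_nonneg : 0 ≤ ∑ i ∈ S, w i := sum_nonneg fun i _ => hw i
  have hsum_le : ∑ i ∈ S, w i ≤ W := hW ▸ sum_le_univ_sum_of_nonneg hw
  simp only [sum_add_distrib, ← hW, sum_const, nsmul_eq_mul, card_univ, hr'] at hS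
  have hcard : #S = r := by
    have hlt : (#S : ℝ) < r + 1 := by nlinarith
    have hgt : (r : ℝ) < #S + 1 := by nlinarith
    norm_cast at hlt hgt
    omega
  rw [hcard] at hS
  exact ⟨by omega, by linarith⟩

end BalancedPartition

namespace PartitionGadget

open Finset SecondPrice

section Instance

variable {c n : ℕ} {w : Fin n → ℕ} {W : ℝ}

/-- The bidder `a`. -/
abbrev bidderA (n : ℕ) : GadgetV n := Sum.inl 0

/-- The bidders `d₁`, `d₂`, indexed from `0`. -/
def bidderD (n : ℕ) (j : Fin 2) : GadgetV n := Sum.inl (Fin.succ (Fin.castSucc j))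

/-- The bidder `f`. -/
abbrev bidderF (n : ℕ) : GadgetV n := Sum.inl 3

/-- The bidders `hᵢ`, indexed from `0`. -/
abbrev bidderH {n : ℕ} (i : Fin (n ^ 2)) : GadgetV n := Sum.inr i

@[simp]
lemma bidderD_inj {j j' : Fin 2} : bidderD n j = bidderD n j' ↔ j = j' := by
  simp [bidderD]

@[simp]
lemma bidderD_ne_bidderA (j : Fin 2) : bidderD n j ≠ bidderA n := by
  fin_cases j <;> simp [bidderD]

@[simp]
lemma bidderD_ne_bidderF (j : Fin 2) : bidderD n j ≠ bidderF n := by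
  fin_cases j <;> simp [bidderD]

@[simp]
lemma bidderD_ne_bidderH (j : Fin 2) (i : Fin (n ^ 2)) : bidderD n j ≠ bidderH i := by
  simp [bidderD]

@[elab_as_elim]
lemma bidderCases {P : GadgetV n → Prop} (a : P (bidderA n)) (d : ∀ j, P (bidderD n j))
    (f : P (bidderF n)) (h : ∀ i, P (bidderH i)) (v : GadgetV n) : P v := by
  rcases v with v | i
  · fin_cases v
    exacts [a, d 0, d 1, f]
  · exact h i

/-- The keywords `c_1, …, c_n`, indexed from `0`. -/
abbrev keywordC (c : ℕ) (i : Fin n) : Fin (n + 2 + c * n ^ 2) :=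
  Fin.castAdd (c * n ^ 2) (Fin.castAdd 2 i)

/-- The keywords `e_1`, `e_2`, indexed from `0`. -/
abbrev keywordE (c n : ℕ) (j : Fin 2) : Fin (n + 2 + c * n ^ 2) :=
  Fin.castAdd (c * n ^ 2) (Fin.natAdd n j)

/-- The keywords `g_{i,k}` in order of arrival: position `j` holds the keyword of `hᵢ` for
`i = owner j`. -/
abbrev keywordG {c n : ℕ} (j : Fin (c * n ^ 2)) : Fin (n + 2 + c * n ^ 2) :=
  Fin.natAdd (n + 2) j

/-- The index `i` such that `hᵢ` bids on the keyword `keywordG j`. -/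
def owner (j : Fin (c * n ^ 2)) : Fin (n ^ 2) :=
  ⟨j / c, Nat.div_lt_of_lt_mul j.2⟩

@[elab_as_elim]
lemma keywordCases {P : Fin (n + 2 + c * n ^ 2) → Prop} (hC : ∀ i, P (keywordC c i))
    (hE : ∀ j, P (keywordE c n j)) (hG : ∀ j, P (keywordG j)) (t : Fin (n + 2 + c * n ^ 2)) :
    P t :=
  Fin.addCases (Fin.addCases hC hE) hG t

lemma sum_keywords (F : Fin (n + 2 + c * n ^ 2) → ℝ) :
    ∑ t, F t = ∑ i, F (keywordC c i) + ∑ j, F (keywordE c n j) + ∑ j, F (keywordG j) := by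
  rw [Fin.sum_univ_add, Fin.sum_univ_add]

lemma gadgetBudget_bidderA : gadgetBudget c n W (bidderA n) = c * W * (1 + n / 2) := by
  simp [gadgetBudget]

lemma gadgetBudget_bidderD (j : Fin 2) :
    gadgetBudget c n W (bidderD n j) = c * W * (1 + n / 2) := by
  fin_cases j <;> simp [gadgetBudget, bidderD]

lemma gadgetBudget_bidderF : gadgetBudget c n W (bidderF n) = c * W * ((n : ℝ) ^ 3 + 1) := by
  simp [gadgetBudget]

lemma gadgetBudget_bidderH (i : Fin (n ^ 2)) :
    gadgetBudget c n W (bidderH i) = c * W * (n : ℝ) ^ 3 :=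
  rfl

lemma gadgetBid_keywordC (i : Fin n) (v : GadgetV n) :
    gadgetBid c n w W (keywordC c i) v =
      if v = bidderA n ∨ ∃ j, v = bidderD n j then c * (w i + W) else 0 := by
  induction v using bidderCases with
  | a => simp [gadgetBid]
  | d j => fin_cases j <;> simp [gadgetBid, bidderD, Fin.exists_fin_two]
  | f => simp [gadgetBid, bidderD, Fin.exists_fin_two]
  | h i => simp [gadgetBid, bidderD]

lemma gadgetBid_keywordE (j : Fin 2) (v : GadgetV n) :
    gadgetBid c n w W (keywordE c n j) v =
      if v = bidderD n j then c * W else if v = bidderF n then c * W / 2 else 0 := by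
  induction v using bidderCases with
  | a => fin_cases j <;> simp [gadgetBid, bidderD]
  | d j' => fin_cases j <;> fin_cases j' <;> simp [gadgetBid, bidderD]
  | f => fin_cases j <;> simp [gadgetBid, bidderD]
  | h i => fin_cases j <;> simp [gadgetBid, bidderD]

lemma gadgetBid_keywordG (j : Fin (c * n ^ 2)) (v : GadgetV n) :
    gadgetBid c n w W (keywordG j) v =
      if v = bidderF n then W * ((n : ℝ) ^ 3 + 1)
      else if v = bidderH (owner j) then W * (n : ℝ) ^ 3 else 0 := by
  have hn : ¬ n + 2 + j.val < n ∧ n + 2 + j.val ≠ n ∧ n + 2 + j.val ≠ n + 1 := by omega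
  rcases v with v | i
  · fin_cases v <;> simp [gadgetBid, hn]
  · simp [gadgetBid, hn, owner, Fin.ext_iff]

lemma gadgetBid_nonneg (hW : 0 ≤ W) (t : Fin (n + 2 + c * n ^ 2)) (v : GadgetV n) :
    0 ≤ gadgetBid c n w W t v := by
  induction t using keywordCases with
  | hC i => rw [gadgetBid_keywordC]; positivity
  | hE j => rw [gadgetBid_keywordE]; positivity
  | hG j => rw [gadgetBid_keywordG]; positivity

lemma gadgetBudget_nonneg (hW : 0 ≤ W) (v : GadgetV n) : 0 ≤ gadgetBudget c n W v := by
  induction v using bidderCases with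
  | a => rw [gadgetBudget_bidderA]; positivity
  | d j => rw [gadgetBudget_bidderD]; positivity
  | f => rw [gadgetBudget_bidderF]; positivity
  | h i => rw [gadgetBudget_bidderH]; positivity

lemma sum_mul_weight_add (hW : W = ∑ i, (w i : ℝ)) :
    ∑ i, (c * (w i + W) : ℝ) = c * W * (n + 1) := by
  simp only [← mul_sum, sum_add_distrib, ← hW, sum_const, card_univ, Fintype.card_fin,
    nsmul_eq_mul]
  ring

end Instance

section PartitionToAllocation

variable {c n : ℕ} {w : Fin n → ℕ} {W : ℝ} {side : Fin n → Fin 2}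

/-- The winners in the allocation built from a partition, where `side i` names the bidder
`d₁` or `d₂` that buys `c_i`: `f` buys `e₁`, `e₂` and the first `c - 1` of the keywords `g_{1,k}`,
and each remaining `g_{i,k}` goes to `hᵢ`. -/
def winner (c : ℕ) {n : ℕ} (side : Fin n → Fin 2) : Fin (n + 2 + c * n ^ 2) → GadgetV n :=
  Fin.addCases (Fin.addCases (fun i => bidderD n (side i)) fun _ => bidderF n)
    fun j => if j.val < c - 1 then bidderF n else bidderH (owner j)

/-- The price-setting bidders in the allocation built from a partition; see `winner`. -/
def runnerUp (c n : ℕ) : Fin (n + 2 + c * n ^ 2) → GadgetV n :=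
  Fin.addCases (Fin.addCases (fun _ => bidderA n) (bidderD n))
    fun j => if j.val < c - 1 then bidderH (owner j) else bidderF n

/-- The prices that the allocation built from a balanced partition achieves; see `winner`. -/
noncomputable def plannedPrice (c : ℕ) {n : ℕ} (w : Fin n → ℕ) (W : ℝ) :
    Fin (n + 2 + c * n ^ 2) → ℝ :=
  Fin.addCases (Fin.addCases (fun i => c * (w i + W)) fun _ => c * W / 2)
    fun _ => W * (n : ℝ) ^ 3

@[simp]
lemma winner_keywordC (i : Fin n) : winner c side (keywordC c i) = bidderD n (side i) := by
  simp [winner]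

@[simp]
lemma winner_keywordE (j : Fin 2) : winner c side (keywordE c n j) = bidderF n := by
  simp [winner]

@[simp]
lemma winner_keywordG_eq_bidderF_iff {j : Fin (c * n ^ 2)} :
    winner c side (keywordG j) = bidderF n ↔ j.val < c - 1 := by
  by_cases hj : j.val < c - 1 <;> simp [winner, hj]

@[simp]
lemma winner_keywordG_eq_bidderH_iff {j : Fin (c * n ^ 2)} {i : Fin (n ^ 2)} :
    winner c side (keywordG j) = bidderH i ↔ c - 1 ≤ j.val ∧ owner j = i := by
  by_cases hj : j.val < c - 1 <;> simp [winner, hj, not_lt.1, not_le.2]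

@[simp]
lemma winner_keywordG_ne_bidderD (j : Fin (c * n ^ 2)) (d : Fin 2) :
    winner c side (keywordG j) ≠ bidderD n d := by
  have hF := (bidderD_ne_bidderF (n := n) d).symm
  have hH := (bidderD_ne_bidderH d (owner j)).symm
  by_cases hj : j.val < c - 1 <;> simp [winner, hj, hF, hH]

lemma winner_ne_bidderA (t : Fin (n + 2 + c * n ^ 2)) : winner c side t ≠ bidderA n := by
  induction t using keywordCases with
  | hC i => simp
  | hE j => simp
  | hG j => by_cases hj : j.val < c - 1 <;> simp [winner, hj]

lemma lt_keywordE_of_winner_eq_bidderD {t : Fin (n + 2 + c * n ^ 2)} {d : Fin 2}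
    (ht : winner c side t = bidderD n d) (j : Fin 2) : t < keywordE c n j := by
  induction t using keywordCases with
  | hC i => simp only [Fin.lt_def, Fin.val_castAdd, Fin.val_natAdd]; omega
  | hE j' => exact absurd ht (by simpa using (bidderD_ne_bidderF d).symm)
  | hG j' => exact absurd ht (winner_keywordG_ne_bidderD j' d)

lemma lt_keywordG_of_winner_eq_bidderF {t : Fin (n + 2 + c * n ^ 2)}
    (ht : winner c side t = bidderF n) {j : Fin (c * n ^ 2)} (hj : c - 1 ≤ j.val) :
    t < keywordG j := by
  induction t using keywordCases with
  | hC i => simp at ht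
  | hE j' => simp only [Fin.lt_def, Fin.val_castAdd, Fin.val_natAdd]; omega
  | hG j' =>
    rw [winner_keywordG_eq_bidderF_iff] at ht
    simp only [Fin.lt_def, Fin.val_natAdd]
    omega

lemma keywordG_lt_of_winner_eq_bidderH {t : Fin (n + 2 + c * n ^ 2)} {i : Fin (n ^ 2)}
    (ht : winner c side t = bidderH i) {j : Fin (c * n ^ 2)} (hj : j.val < c - 1) :
    keywordG j < t := by
  induction t using keywordCases with
  | hC i => simp at ht
  | hE j' => simp at ht
  | hG j' =>
    rw [winner_keywordG_eq_bidderH_iff] at ht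
    simp only [Fin.lt_def, Fin.val_natAdd]
    omega

@[simp]
lemma runnerUp_keywordC (i : Fin n) : runnerUp c n (keywordC c i) = bidderA n := by
  simp [runnerUp]

@[simp]
lemma runnerUp_keywordE (j : Fin 2) : runnerUp c n (keywordE c n j) = bidderD n j := by
  simp [runnerUp]

@[simp]
lemma runnerUp_keywordG (j : Fin (c * n ^ 2)) :
    runnerUp c n (keywordG j) = if j.val < c - 1 then bidderH (owner j) else bidderF n := by
  simp [runnerUp]

@[simp]
lemma plannedPrice_keywordC (i : Fin n) :
    plannedPrice c w W (keywordC c i) = c * (w i + W) := by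
  simp [plannedPrice]

@[simp]
lemma plannedPrice_keywordE (j : Fin 2) : plannedPrice c w W (keywordE c n j) = c * W / 2 := by
  simp [plannedPrice]

@[simp]
lemma plannedPrice_keywordG (j : Fin (c * n ^ 2)) :
    plannedPrice c w W (keywordG j) = W * (n : ℝ) ^ 3 := by
  simp [plannedPrice]

lemma winner_ne_runnerUp (t : Fin (n + 2 + c * n ^ 2)) : winner c side t ≠ runnerUp c n t := by
  induction t using keywordCases with
  | hC i => simp
  | hE j => simpa using (bidderD_ne_bidderF j).symm
  | hG j => by_cases hj : j.val < c - 1 <;> simp [winner, hj]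

lemma plannedPrice_nonneg (hW : 0 ≤ W) (t : Fin (n + 2 + c * n ^ 2)) :
    0 ≤ plannedPrice c w W t := by
  induction t using keywordCases with
  | hC i => rw [plannedPrice_keywordC]; positivity
  | hE j => rw [plannedPrice_keywordE]; positivity
  | hG j => rw [plannedPrice_keywordG]; positivity

lemma plannedPrice_le_gadgetBid_winner (hW : 0 ≤ W) (t : Fin (n + 2 + c * n ^ 2)) :
    plannedPrice c w W t ≤ gadgetBid c n w W t (winner c side t) := by
  induction t using keywordCases with
  | hC i => simp [gadgetBid_keywordC]
  | hE j => simp [gadgetBid_keywordE, (bidderD_ne_bidderF j).symm]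
  | hG j =>
    rw [plannedPrice_keywordG, gadgetBid_keywordG]
    by_cases hj : j.val < c - 1
    · rw [if_pos (winner_keywordG_eq_bidderF_iff.2 hj)]
      gcongr
      linarith
    · rw [if_neg (mt winner_keywordG_eq_bidderF_iff.1 hj),
        if_pos (winner_keywordG_eq_bidderH_iff.2 ⟨not_lt.1 hj, rfl⟩)]

lemma sum_plannedPrice (hW : W = ∑ i, (w i : ℝ)) :
    ∑ t, plannedPrice c w W t = c * W * ((n : ℝ) ^ 5 + n + 2) := by
  rw [sum_keywords]
  simp only [plannedPrice_keywordC, plannedPrice_keywordE, plannedPrice_keywordG,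
    sum_mul_weight_add hW, sum_const, card_univ, Fintype.card_fin, nsmul_eq_mul]
  push_cast
  ring

lemma sum_plannedPrice_bidderD
    (hside : ∀ j, ∑ i with side i = j, (w i + W) = W * (n + 1) / 2) (j : Fin 2) :
    ∑ s with winner c side s = bidderD n j, plannedPrice c w W s = c * W * (n + 1) / 2 := by
  rw [sum_filter, sum_keywords]
  simp only [winner_keywordC, winner_keywordE, winner_keywordG_ne_bidderD, bidderD_inj,
    (bidderD_ne_bidderF j).symm, if_false, plannedPrice_keywordC, sum_const_zero, add_zero]
  rw [← sum_filter, ← mul_sum, hside]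
  ring

lemma sum_plannedPrice_bidderF :
    ∑ s with winner c side s = bidderF n, plannedPrice c w W s =
      c * W + (min (c * n ^ 2) (c - 1) : ℕ) * (W * (n : ℝ) ^ 3) := by
  rw [sum_filter, sum_keywords]
  simp only [winner_keywordC, winner_keywordE, winner_keywordG_eq_bidderF_iff,
    bidderD_ne_bidderF, if_true, if_false, plannedPrice_keywordE, plannedPrice_keywordG,
    sum_const_zero, zero_add]
  rw [← sum_filter, sum_const, sum_const, Fin.card_filter_val_lt, card_univ, Fintype.card_fin,
    nsmul_eq_mul, nsmul_eq_mul]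
  push_cast
  ring

lemma card_filter_owner_eq_le (i : Fin (n ^ 2)) : #{j : Fin (c * n ^ 2) | owner j = i} ≤ c := by
  calc #{j : Fin (c * n ^ 2) | owner j = i} ≤ #(Ico (i * c) (i * c + c)) := by
        refine card_le_card_of_injOn Fin.val (fun j hj => ?_) Fin.val_injective.injOn
        have hc : 0 < c := Nat.pos_of_mul_pos_right j.pos
        have hdiv : j.val / c = i := congrArg Fin.val (by simpa using hj)
        rw [Nat.div_eq_iff hc] at hdiv
        rw [coe_Ico, Set.mem_Ico]
        omega
    _ = c := by simp

lemma sum_plannedPrice_bidderH_le (hW : 0 ≤ W) (i : Fin (n ^ 2)) :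
    ∑ s with winner c side s = bidderH i, plannedPrice c w W s ≤ c * W * (n : ℝ) ^ 3 := by
  rw [sum_filter, sum_keywords]
  simp only [winner_keywordC, winner_keywordE, winner_keywordG_eq_bidderH_iff,
    bidderD_ne_bidderH, reduceCtorEq, if_false, plannedPrice_keywordG, sum_const_zero, zero_add]
  rw [← sum_filter, sum_const, nsmul_eq_mul, mul_assoc]
  gcongr
  exact (card_le_card (monotone_filter_right _ fun _ _ => And.right)).trans
    (card_filter_owner_eq_le i)

lemma sum_plannedPrice_winner_le (hW : 0 ≤ W)
    (hside : ∀ j, ∑ i with side i = j, (w i + W) = W * (n + 1) / 2) (v : GadgetV n) :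
    ∑ s with winner c side s = v, plannedPrice c w W s ≤ gadgetBudget c n W v := by
  have hcW : 0 ≤ c * W := by positivity
  induction v using bidderCases with
  | a =>
    simpa only [winner_ne_bidderA, filter_false, sum_empty] using
      gadgetBudget_nonneg hW (bidderA n)
  | d j =>
    rw [gadgetBudget_bidderD, sum_plannedPrice_bidderD hside]
    linarith
  | f =>
    have hcount : ((min (c * n ^ 2) (c - 1) : ℕ) : ℝ) ≤ c := by
      exact_mod_cast (min_le_right _ _).trans (Nat.sub_le c 1)
    rw [gadgetBudget_bidderF, sum_plannedPrice_bidderF]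
    calc c * W + (min (c * n ^ 2) (c - 1) : ℕ) * (W * (n : ℝ) ^ 3)
        ≤ c * W + c * (W * (n : ℝ) ^ 3) := by gcongr
      _ = c * W * ((n : ℝ) ^ 3 + 1) := by ring
  | h i => exact sum_plannedPrice_bidderH_le hW i

lemma mul_weight_add_le_gadgetBudget_bidderA (hn : Even n) (hW : W = ∑ i, (w i : ℝ)) (i : Fin n) :
    c * (w i + W) ≤ gadgetBudget c n W (bidderA n) := by
  have hn2 : (2 : ℝ) ≤ n := by
    have := i.pos
    exact_mod_cast (by grind : 2 ≤ n)
  have hwi : (w i : ℝ) ≤ W :=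
    hW ▸ single_le_sum (f := fun i => (w i : ℝ)) (fun _ _ => Nat.cast_nonneg _) (mem_univ i)
  rw [gadgetBudget_bidderA, mul_assoc]
  gcongr
  nlinarith

lemma min_gadgetBid_runnerUp_keywordG_eq (hW : 0 ≤ W) (j : Fin (c * n ^ 2)) :
    min (gadgetBid c n w W (keywordG j) (runnerUp c n (keywordG j)))
        (gadgetBudget c n W (runnerUp c n (keywordG j)) -
          ∑ s with s < keywordG j ∧ winner c side s = runnerUp c n (keywordG j),
            plannedPrice c w W s) =
      W * (n : ℝ) ^ 3 := by
  have hN : 0 ≤ W * (n : ℝ) ^ 3 := by positivity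
  by_cases hj : j.val < c - 1
  · have hbefore (s : Fin (n + 2 + c * n ^ 2)) :
        ¬ (s < keywordG j ∧ winner c side s = bidderH (owner j)) :=
      fun hs => hs.1.asymm (keywordG_lt_of_winner_eq_bidderH hs.2 hj)
    have hc : (1 : ℝ) ≤ c := by exact_mod_cast (by omega : 1 ≤ c)
    simp only [runnerUp_keywordG, hj, if_true, hbefore, filter_false, sum_empty, sub_zero,
      gadgetBid_keywordG, reduceCtorEq, if_false, gadgetBudget_bidderH]
    exact min_eq_left (by nlinarith)
  · have hbefore (s : Fin (n + 2 + c * n ^ 2)) :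
        s < keywordG j ∧ winner c side s = bidderF n ↔ winner c side s = bidderF n :=
      and_iff_right_of_imp fun hs => lt_keywordG_of_winner_eq_bidderF hs (not_lt.1 hj)
    have hc : 1 ≤ c := Nat.pos_of_mul_pos_right j.pos
    have hmin : min (c * n ^ 2) (c - 1) = c - 1 := min_eq_right (by omega)
    simp only [runnerUp_keywordG, hj, if_false, hbefore, sum_plannedPrice_bidderF, hmin,
      Nat.cast_sub hc, Nat.cast_one, gadgetBudget_bidderF, gadgetBid_keywordG, if_true]
    rw [min_eq_right] <;> linarith

lemma min_gadgetBid_runnerUp_eq_plannedPrice (hn : Even n) (hW : W = ∑ i, (w i : ℝ))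
    (hside : ∀ j, ∑ i with side i = j, (w i + W) = W * (n + 1) / 2)
    (t : Fin (n + 2 + c * n ^ 2)) :
    min (gadgetBid c n w W t (runnerUp c n t)) (gadgetBudget c n W (runnerUp c n t) -
        ∑ s with s < t ∧ winner c side s = runnerUp c n t, plannedPrice c w W s) =
      plannedPrice c w W t := by
  have hW0 : 0 ≤ W := hW ▸ sum_nonneg fun i _ => by positivity
  induction t using keywordCases with
  | hC i =>
    rw [runnerUp_keywordC, plannedPrice_keywordC, gadgetBid_keywordC, if_pos (Or.inl rfl)]
    simpa only [winner_ne_bidderA, and_false, filter_false, sum_empty, sub_zero] using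
      min_eq_left (mul_weight_add_le_gadgetBudget_bidderA hn hW i)
  | hE j =>
    have hbefore (s : Fin (n + 2 + c * n ^ 2)) :
        s < keywordE c n j ∧ winner c side s = bidderD n j ↔ winner c side s = bidderD n j :=
      and_iff_right_of_imp fun hs => lt_keywordE_of_winner_eq_bidderD hs j
    have hcW : 0 ≤ c * W := by positivity
    rw [runnerUp_keywordE, plannedPrice_keywordE, gadgetBid_keywordE, if_pos rfl]
    simp only [hbefore, sum_plannedPrice_bidderD hside, gadgetBudget_bidderD]
    rw [min_eq_right] <;> linarith
  | hG j => rw [plannedPrice_keywordG, min_gadgetBid_runnerUp_keywordG_eq hW0]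

lemma exists_side_of_balanced (hW : W = ∑ i, (w i : ℝ)) {S : Finset (Fin n)}
    (hcard : 2 * #S = n) (hsum : 2 * ∑ i ∈ S, (w i : ℝ) = W) :
    ∃ side : Fin n → Fin 2, ∀ j, ∑ i with side i = j, (w i + W) = W * (n + 1) / 2 := by
  classical
  have hcard' : 2 * (#S : ℝ) = n := by exact_mod_cast hcard
  have hS : ∑ i ∈ S, (w i + W) = W * (n + 1) / 2 := by
    rw [sum_add_distrib, sum_const, nsmul_eq_mul]
    linear_combination hsum / 2 + W / 2 * hcard'
  have hSc : ∑ i ∈ Sᶜ, (w i + W) = W * (n + 1) / 2 := by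
    have htotal := sum_mul_weight_add (c := 1) hW
    simp only [Nat.cast_one, one_mul] at htotal
    linarith [sum_add_sum_compl S fun i => (w i + W : ℝ)]
  refine ⟨fun i => if i ∈ S then 0 else 1, Fin.forall_fin_two.2 ⟨?_, ?_⟩⟩
  · simpa using hS
  · simpa [compl_eq_univ_sdiff, sdiff_eq_filter] using hSc

theorem exists_feasible_value_eq_of_balanced (hn : Even n) (hW : W = ∑ i, (w i : ℝ))
    {S : Finset (Fin n)} (hcard : 2 * #S = n) (hsum : 2 * ∑ i ∈ S, (w i : ℝ) = W) :
    ∃ alloc : Fin (n + 2 + c * n ^ 2) → Option (GadgetV n × GadgetV n),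
      Feasible2PAA _ (gadgetBid c n w W) (gadgetBudget c n W) alloc ∧
      value2PAA _ (gadgetBid c n w W) (gadgetBudget c n W) alloc =
        c * W * ((n : ℝ) ^ 5 + n + 2) := by
  have hW0 : 0 ≤ W := hW ▸ sum_nonneg fun i _ => by positivity
  obtain ⟨side, hside⟩ := exists_side_of_balanced hW hcard hsum
  have hplan := min_gadgetBid_runnerUp_eq_plannedPrice (c := c) hn hW hside
  refine ⟨fun t => some (winner c side t, runnerUp c n t), ?_, ?_⟩
  · exact feasible_of_plan winner_ne_runnerUp (plannedPrice_nonneg hW0)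
      (plannedPrice_le_gadgetBid_winner hW0) (sum_plannedPrice_winner_le hW0 hside) hplan
  · rw [value2PAA, sum_congr rfl fun t _ => price_eq_of_plan hplan t, sum_plannedPrice hW]

end PartitionToAllocation

section AllocationToPartition

variable {c n : ℕ} {w : Fin n → ℕ} {W : ℝ}
  {alloc : Fin (n + 2 + c * n ^ 2) → Option (GadgetV n × GadgetV n)}

local notation "price" => price2PAA _ (gadgetBid c n w W) (gadgetBudget c n W) alloc
local notation "paid" => payment _ (gadgetBid c n w W) (gadgetBudget c n W) alloc
local notation "remaining" => budgetRem _ (gadgetBid c n w W) (gadgetBudget c n W) alloc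
local notation "IsFeasible" => Feasible2PAA _ (gadgetBid c n w W) (gadgetBudget c n W) alloc

lemma price_keywordC_le (hW : 0 ≤ W) (hf : IsFeasible) (i : Fin n) :
    price (keywordC c i) ≤ c * (w i + W) := by
  have hx : 0 ≤ c * (w i + W) := by positivity
  refine price_le_of_forall_ne_bid_le hf hx (bidderA n) fun v _ => ?_
  rw [gadgetBid_keywordC]
  split_ifs
  exacts [le_rfl, hx]

lemma price_keywordE_le (hW : 0 ≤ W) (hf : IsFeasible) (j : Fin 2) :
    price (keywordE c n j) ≤ c * W / 2 := by
  have hx : 0 ≤ c * W / 2 := by positivity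
  refine price_le_of_forall_ne_bid_le hf hx (bidderD n j) fun v hv => ?_
  rw [gadgetBid_keywordE, if_neg hv]
  split_ifs
  exacts [le_rfl, hx]

lemma price_keywordG_le (hW : 0 ≤ W) (hf : IsFeasible) (j : Fin (c * n ^ 2)) :
    price (keywordG j) ≤ W * (n : ℝ) ^ 3 := by
  have hx : 0 ≤ W * (n : ℝ) ^ 3 := by positivity
  refine price_le_of_forall_ne_bid_le hf hx (bidderF n) fun v hv => ?_
  rw [gadgetBid_keywordG, if_neg hv]
  split_ifs
  exacts [le_rfl, hx]

lemma alloc_keywordE_of_price_pos (hf : IsFeasible) {j : Fin 2}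
    (hj : 0 < price (keywordE c n j)) :
    alloc (keywordE c n j) = some (bidderF n, bidderD n j) ∨
      alloc (keywordE c n j) = some (bidderD n j, bidderF n) :=
  alloc_eq_or_eq_swap_of_price_pos hf
    (fun v hF hD => by rw [gadgetBid_keywordE, if_neg hD, if_neg hF]) hj

lemma alloc_keywordG_of_price_pos (hf : IsFeasible) {j : Fin (c * n ^ 2)}
    (hj : 0 < price (keywordG j)) :
    alloc (keywordG j) = some (bidderF n, bidderH (owner j)) ∨
      alloc (keywordG j) = some (bidderH (owner j), bidderF n) :=
  alloc_eq_or_eq_swap_of_price_pos hf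
    (fun v hF hH => by rw [gadgetBid_keywordG, if_neg hF, if_neg hH]) hj

lemma price_keywordG_le_remaining_bidderF (hW : 0 ≤ W) (hf : IsFeasible) (j : Fin (c * n ^ 2)) :
    price (keywordG j) ≤ remaining (n + 2 + j) (bidderF n) := by
  rcases le_or_gt (price (keywordG j)) 0 with hj | hj
  · exact hj.trans (budgetRem_nonneg (gadgetBudget_nonneg hW) hf _ _)
  · rcases alloc_keywordG_of_price_pos hf hj with h | h
    · rw [price_of_eq_some h]
      exact (hf _ _ h).2.trans (min_le_right _ _)
    · rw [price_of_eq_some h]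
      exact min_le_right _ _

-- If `f` lost to `hᵢ`, the price would be the truncated bid of `f`, which exceeds the bid of `hᵢ`.
lemma alloc_keywordG_eq_and_price_eq (hW : 0 < W) (hf : IsFeasible) {j : Fin (c * n ^ 2)}
    (hj : 0 < price (keywordG j)) (hF : W * (n : ℝ) ^ 3 < remaining (n + 2 + j) (bidderF n))
    (hH : W * (n : ℝ) ^ 3 ≤ remaining (n + 2 + j) (bidderH (owner j))) :
    alloc (keywordG j) = some (bidderF n, bidderH (owner j)) ∧
      price (keywordG j) = W * (n : ℝ) ^ 3 := by
  rcases alloc_keywordG_of_price_pos hf hj with h | h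
  · refine ⟨h, ?_⟩
    rw [price_of_eq_some h, gadgetBid_keywordG, if_neg (by simp), if_pos rfl]
    exact min_eq_left hH
  · have hle := price_keywordG_le hW.le hf j
    rw [price_of_eq_some h, gadgetBid_keywordG, if_pos rfl] at hle
    exact absurd hle (not_le.2 (lt_min (by linarith) hF))

lemma remaining_eq_budget_sub (v : GadgetV n) :
    remaining (n + 2) v = gadgetBudget c n W v -
      (∑ i, paid v (keywordC c i) + ∑ j, paid v (keywordE c n j)) := by
  have hC (i : Fin n) : (keywordC c i).val < n + 2 := (Fin.castAdd 2 i).isLt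
  have hE (j : Fin 2) : (keywordE c n j).val < n + 2 := (Fin.natAdd n j).isLt
  have hG (j : Fin (c * n ^ 2)) : ¬ (keywordG j).val < n + 2 := by simp
  rw [budgetRem_eq_sub_sum, sum_filter, sum_keywords]
  simp only [hC, hE, hG, if_true, if_false, sum_const_zero, add_zero]

lemma remaining_bidderH (hW : 0 ≤ W) (hf : IsFeasible) (i : Fin (n ^ 2)) :
    remaining (n + 2) (bidderH i) = c * W * (n : ℝ) ^ 3 := by
  have hzero {t : Fin (n + 2 + c * n ^ 2)} :
      gadgetBid c n w W t (bidderH i) = 0 → paid (bidderH i) t = 0 :=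
    payment_eq_zero_of_bid_eq_zero (gadgetBid_nonneg hW) (gadgetBudget_nonneg hW) hf
  have hC (k : Fin n) : paid (bidderH i) (keywordC c k) = 0 :=
    hzero (by simp [gadgetBid_keywordC, (bidderD_ne_bidderH _ _).symm])
  have hE (j : Fin 2) : paid (bidderH i) (keywordE c n j) = 0 :=
    hzero (by simp [gadgetBid_keywordE, (bidderD_ne_bidderH _ _).symm])
  rw [remaining_eq_budget_sub, gadgetBudget_bidderH]
  simp only [hC, hE, sum_const_zero, add_zero, sub_zero]

lemma remaining_keywordG_succ (j : Fin (c * n ^ 2)) (v : GadgetV n) :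
    remaining (n + 2 + (j + 1)) v = remaining (n + 2 + j) v - paid v (keywordG j) :=
  budgetRem_succ (keywordG j) v

lemma remaining_antitone (hW : 0 ≤ W) (hf : IsFeasible) (v : GadgetV n) :
    Antitone fun k => remaining k v :=
  budgetRem_antitone (gadgetBid_nonneg hW) (gadgetBudget_nonneg hW) hf v

lemma remaining_bidderF_le (hW : 0 ≤ W) (hf : IsFeasible) (k : ℕ) :
    remaining k (bidderF n) ≤ c * W * ((n : ℝ) ^ 3 + 1) :=
  (remaining_antitone hW hf (bidderF n) k.zero_le).trans_eq gadgetBudget_bidderF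

lemma exists_remaining_bidderF_eq_sub (hc : 1 ≤ c) (hW : 0 < W) (hf : IsFeasible)
    (hrich : c * W * (n : ℝ) ^ 3 < remaining (n + 2) (bidderF n)) {k : ℕ} (hk : k ≤ c * n ^ 2)
    (hF : c * W < remaining (n + 2 + k) (bidderF n)) :
    ∃ q < c, remaining (n + 2 + k) (bidderF n) =
        remaining (n + 2) (bidderF n) - q * (W * (n : ℝ) ^ 3) ∧
      ∑ s : Fin (c * n ^ 2) with s.val < k, price (keywordG s) = q * (W * (n : ℝ) ^ 3) ∧
      ∀ i, remaining (n + 2 + k) (bidderH i) = c * W * (n : ℝ) ^ 3 := by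
  have hN : 0 ≤ W * (n : ℝ) ^ 3 := by positivity
  induction k with
  | zero => exact ⟨0, hc, by simp, by simp, remaining_bidderH hW.le hf⟩
  | succ k ih =>
    let j : Fin (c * n ^ 2) := ⟨k, hk⟩
    obtain ⟨q, hq, hFq, hsum, hH⟩ := ih (Nat.le_of_succ_le hk)
      (hF.trans_le (remaining_antitone hW.le hf _ (by omega)))
    have hstep := remaining_keywordG_succ (w := w) (W := W) (alloc := alloc) j
    have hsumStep := sum_filter_val_lt_succ (fun s => price (keywordG s)) j
    rcases (price_nonneg (gadgetBid_nonneg hW.le) (gadgetBudget_nonneg hW.le) hf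
      (keywordG j)).eq_or_lt with hj | hj
    · have hpaid (v : GadgetV n) : paid v (keywordG j) = 0 :=
        payment_eq_zero_of_price_eq_zero hj.symm v
      simp only [hpaid, sub_zero] at hstep
      exact ⟨q, hq, by rw [hstep, hFq], by rw [hsumStep, ← hj, hsum, add_zero],
        fun i => by rw [hstep, hH]⟩
    · have hq1 : (q : ℝ) + 1 ≤ c := by exact_mod_cast hq
      obtain ⟨halloc, hprice⟩ := alloc_keywordG_eq_and_price_eq hW hf hj
        (by rw [hFq]; nlinarith) (by rw [hH]; nlinarith)
      have hFnext : remaining (n + 2 + (k + 1)) (bidderF n) =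
          remaining (n + 2) (bidderF n) - (q + 1 : ℕ) * (W * (n : ℝ) ^ 3) := by
        rw [hstep, hFq, payment_of_eq_some halloc, if_pos rfl, hprice]
        push_cast
        ring
      have hlt : ((q + 1 : ℕ) : ℝ) < c := by
        refine lt_of_mul_lt_mul_right ?_ hN
        linarith [remaining_bidderF_le hW.le hf (n + 2)]
      refine ⟨q + 1, by exact_mod_cast hlt, hFnext, ?_, fun i => ?_⟩
      · rw [hsumStep, hsum, hprice]
        push_cast
        ring
      · rw [hstep, hH, payment_of_eq_some halloc, if_neg (by simp), sub_zero]

lemma sum_price_keywordG_lt_le (hc : 1 ≤ c) (hn : 1 ≤ n) (hW : 0 < W) (hf : IsFeasible)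
    (hrich : c * W * (n : ℝ) ^ 3 < remaining (n + 2) (bidderF n)) {k : ℕ}
    (hk : k ≤ c * n ^ 2) :
    ∑ s : Fin (c * n ^ 2) with s.val < k, price (keywordG s) ≤
      c * W * (n : ℝ) ^ 3 + (k - 1) * (c * W) := by
  have hcW : 0 ≤ c * W := by positivity
  induction k with
  | zero =>
    have hn1 : (1 : ℝ) ≤ (n : ℝ) ^ 3 := one_le_pow₀ (by exact_mod_cast hn)
    simpa using le_mul_of_one_le_right hcW hn1
  | succ k ih =>
    let j : Fin (c * n ^ 2) := ⟨k, hk⟩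
    rw [sum_filter_val_lt_succ _ j]
    push_cast
    rcases le_or_gt (remaining (n + 2 + k) (bidderF n)) (c * W) with hF | hF
    · have hprice := (price_keywordG_le_remaining_bidderF hW.le hf j).trans hF
      linarith [ih (Nat.le_of_succ_le hk)]
    · obtain ⟨q, hq, -, hsum, -⟩ :=
        exists_remaining_bidderF_eq_sub hc hW hf hrich (Nat.le_of_succ_le hk) hF
      have hq1 : (q : ℝ) + 1 ≤ c := by exact_mod_cast hq
      calc ∑ s : Fin (c * n ^ 2) with s.val < k, price (keywordG s) + price (keywordG j)
          ≤ q * (W * (n : ℝ) ^ 3) + W * (n : ℝ) ^ 3 :=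
            add_le_add hsum.le (price_keywordG_le hW.le hf j)
        _ = (q + 1) * (W * (n : ℝ) ^ 3) := by ring
        _ ≤ c * (W * (n : ℝ) ^ 3) := by gcongr
        _ ≤ c * W * (n : ℝ) ^ 3 + (k + 1 - 1) * (c * W) := by
            have : 0 ≤ k * (c * W) := by positivity
            linarith

lemma remaining_bidderF_le_of_le_value (hc : 1 ≤ c) (hn : 1 ≤ n) (hW : W = ∑ i, (w i : ℝ))
    (hpos : 0 < W) (hf : IsFeasible)
    (hvalue : c * W * ((n : ℝ) ^ 3 + c * (n : ℝ) ^ 2 + n + 2) ≤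
      value2PAA _ (gadgetBid c n w W) (gadgetBudget c n W) alloc) :
    remaining (n + 2) (bidderF n) ≤ c * W * (n : ℝ) ^ 3 := by
  by_contra! hrich
  have hC : ∑ i, price (keywordC c i) ≤ c * W * (n + 1) :=
    (sum_le_sum fun i _ => price_keywordC_le hpos.le hf i).trans_eq (sum_mul_weight_add hW)
  have hE : ∑ j, price (keywordE c n j) ≤ c * W := by
    rw [Fin.sum_univ_two]
    linarith [price_keywordE_le hpos.le hf 0, price_keywordE_le hpos.le hf 1]
  have hG := sum_price_keywordG_lt_le hc hn hpos hf hrich le_rfl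
  simp only [Fin.is_lt, filter_true, Nat.cast_mul, Nat.cast_pow] at hG
  have hcW : 0 < c * W := by positivity
  rw [value2PAA, sum_keywords] at hvalue
  linarith

lemma half_le_paid_bidderF_keywordE (hW : 0 ≤ W) (hf : IsFeasible)
    (hF : remaining (n + 2) (bidderF n) ≤ c * W * (n : ℝ) ^ 3) (j : Fin 2) :
    c * W / 2 ≤ paid (bidderF n) (keywordE c n j) := by
  have hC (i : Fin n) : paid (bidderF n) (keywordC c i) = 0 :=
    payment_eq_zero_of_bid_eq_zero (gadgetBid_nonneg hW) (gadgetBudget_nonneg hW) hf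
      (by simp [gadgetBid_keywordC, (bidderD_ne_bidderF _).symm])
  have hE (j : Fin 2) : paid (bidderF n) (keywordE c n j) ≤ c * W / 2 :=
    (payment_le_price (gadgetBid_nonneg hW) (gadgetBudget_nonneg hW) hf _ _).trans
      (price_keywordE_le hW hf j)
  rw [remaining_eq_budget_sub, gadgetBudget_bidderF] at hF
  simp only [hC, sum_const_zero, zero_add, Fin.sum_univ_two] at hF
  match j with
  | 0 => linarith [hE 1]
  | 1 => linarith [hE 0]

lemma half_le_sum_paid_bidderD_keywordC (hc : 1 ≤ c) (hW : 0 < W) (hf : IsFeasible) {j : Fin 2}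
    (hj : c * W / 2 ≤ paid (bidderF n) (keywordE c n j)) :
    c * W * (n + 1) / 2 ≤ ∑ i, paid (bidderD n j) (keywordC c i) := by
  have hcW : 0 < c * W := by positivity
  have hpaidF : 0 < paid (bidderF n) (keywordE c n j) := by linarith
  have hprice : 0 < price (keywordE c n j) := hpaidF.trans_le
    (payment_le_price (gadgetBid_nonneg hW.le) (gadgetBudget_nonneg hW.le) hf _ _)
  have hremaining : remaining (keywordE c n j) (bidderD n j) ≤ c * W / 2 := by
    rcases alloc_keywordE_of_price_pos hf hprice with h | h
    · have hle := price_keywordE_le hW.le hf j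
      rw [price_of_eq_some h, gadgetBid_keywordE, if_pos rfl, min_le_iff] at hle
      exact hle.resolve_left (by linarith)
    · simp [payment_of_eq_some h] at hpaidF
  have hE (j' : Fin 2) : paid (bidderD n j) (keywordE c n j') = 0 := by
    rcases eq_or_ne j' j with rfl | hne
    · exact (payment_eq_zero_or_payment_eq_zero (bidderD_ne_bidderF j') _).resolve_right
        hpaidF.ne'
    · exact payment_eq_zero_of_bid_eq_zero (gadgetBid_nonneg hW.le) (gadgetBudget_nonneg hW.le) hf
        (by simp [gadgetBid_keywordE, hne.symm])
  have hlater : remaining (n + 2) (bidderD n j) ≤ remaining (keywordE c n j) (bidderD n j) :=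
    remaining_antitone hW.le hf _ (Fin.natAdd n j).isLt.le
  rw [remaining_eq_budget_sub, gadgetBudget_bidderD] at hlater
  simp only [hE, sum_const_zero, add_zero] at hlater
  linarith

lemma exists_balanced_of_le_value_of_pos (hc : 1 ≤ c) (hn : Even n) (hW : W = ∑ i, (w i : ℝ))
    (hpos : 0 < W) (hf : IsFeasible)
    (hvalue : c * W * ((n : ℝ) ^ 3 + c * (n : ℝ) ^ 2 + n + 2) ≤
      value2PAA _ (gadgetBid c n w W) (gadgetBudget c n W) alloc) :
    ∃ S : Finset (Fin n), 2 * #S = n ∧ 2 * ∑ i ∈ S, (w i : ℝ) = W := by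
  have hn1 : 1 ≤ n := by
    by_contra! h
    obtain rfl : n = 0 := by omega
    simp [hW] at hpos
  have hF := remaining_bidderF_le_of_le_value hc hn1 hW hpos hf hvalue
  have hD (j : Fin 2) := half_le_sum_paid_bidderD_keywordC hc hpos hf
    (half_le_paid_bidderF_keywordE hpos.le hf hF j)
  have hle (j : Fin 2) (i : Fin n) : paid (bidderD n j) (keywordC c i) ≤ c * (w i + W) :=
    (payment_le_price (gadgetBid_nonneg hpos.le) (gadgetBudget_nonneg hpos.le) hf _ _).trans
      (price_keywordC_le hpos.le hf i)
  rw [← sum_mul_weight_add hW] at hD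
  obtain ⟨S, hS⟩ := exists_sum_eq_half_of_disjoint_support (hle 0) (hle 1)
    (fun i => payment_eq_zero_or_payment_eq_zero (by simp) _) (hD 0) (hD 1)
  have hc0 : (c : ℝ) ≠ 0 := by positivity
  rw [← mul_sum, ← mul_sum, mul_div_assoc, mul_right_inj' hc0] at hS
  refine ⟨S, ?_⟩
  simpa using two_mul_card_eq_and_two_mul_sum_eq (fun i => (w i).cast_nonneg) hW hpos
    (by simpa using hn) hS

lemma exists_balanced_of_sum_eq_zero (hn : Even n) (hw : ∑ i, (w i : ℝ) = 0) :
    ∃ S : Finset (Fin n), 2 * #S = n ∧ 2 * ∑ i ∈ S, (w i : ℝ) = 0 := by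
  obtain ⟨S, -, hcard⟩ := exists_subset_card_eq (s := (univ : Finset (Fin n))) (n := n / 2)
    (by simpa using Nat.div_le_self n 2)
  have hzero := (sum_eq_zero_iff_of_nonneg fun i _ => (w i).cast_nonneg).1 hw
  exact ⟨S, hcard ▸ Nat.two_mul_div_two_of_even hn,
    by rw [sum_eq_zero fun i _ => hzero i (mem_univ i), mul_zero]⟩

theorem exists_balanced_of_le_value (hc : 1 ≤ c) (hn : Even n) (hW : W = ∑ i, (w i : ℝ))
    (hf : IsFeasible)
    (hvalue : c * W * ((n : ℝ) ^ 3 + c * (n : ℝ) ^ 2 + n + 2) ≤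
      value2PAA _ (gadgetBid c n w W) (gadgetBudget c n W) alloc) :
    ∃ S : Finset (Fin n), 2 * #S = n ∧ 2 * ∑ i ∈ S, (w i : ℝ) = W := by
  have hW0 : 0 ≤ W := hW ▸ sum_nonneg fun i _ => (w i).cast_nonneg
  rcases hW0.eq_or_lt with rfl | hpos
  · exact exists_balanced_of_sum_eq_zero hn hW.symm
  · exact exists_balanced_of_le_value_of_pos hc hn hW hpos hf hvalue

end AllocationToPartition

end PartitionGadget

theorem stmt19_general (c n : ℕ) (hc : 1 ≤ c) (hn : Even n) (w : Fin n → ℕ) (W : ℝ)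
    (hW : W = ∑ i, (w i : ℝ)) :
    ((∃ S : Finset (Fin n), 2 * S.card = n ∧ 2 * ∑ i ∈ S, (w i : ℝ) = W) →
      ∃ alloc : Fin (n + 2 + c * n ^ 2) → Option (GadgetV n × GadgetV n),
        Feasible2PAA _ (gadgetBid c n w W) (gadgetBudget c n W) alloc ∧
        value2PAA _ (gadgetBid c n w W) (gadgetBudget c n W) alloc ≥
          c * W * ((n : ℝ) ^ 5 + n + 2)) ∧
    ((∃ alloc : Fin (n + 2 + c * n ^ 2) → Option (GadgetV n × GadgetV n),
        Feasible2PAA _ (gadgetBid c n w W) (gadgetBudget c n W) alloc ∧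
        value2PAA _ (gadgetBid c n w W) (gadgetBudget c n W) alloc ≥
          c * W * ((n : ℝ) ^ 3 + c * (n : ℝ) ^ 2 + n + 2)) →
      ∃ S : Finset (Fin n), 2 * S.card = n ∧ 2 * ∑ i ∈ S, (w i : ℝ) = W) := by
  constructor
  · rintro ⟨S, hcard, hsum⟩
    obtain ⟨alloc, hf, hvalue⟩ :=
      PartitionGadget.exists_feasible_value_eq_of_balanced hn hW hcard hsum
    exact ⟨alloc, hf, hvalue.ge⟩
  · rintro ⟨alloc, hf, hvalue⟩
    exact PartitionGadget.exists_balanced_of_le_value hc hn hW hf hvalue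

/-- in the PARTITION gadget instance for 2PAA(c) (with `n` even and
large enough that `(n/2 + 1)/2 ≥ c`): if the weights admit a balanced partition
(two sets of size `n/2`, each of weight `W/2`), then the instance has a feasible
second-price allocation of value at least `cW(n⁵ + n + 2)`; conversely, any feasible
allocation of value at least `cW(n³ + cn² + n + 2)` yields such a balanced partition. -/
theorem stmt19 (c n : ℕ) (hc : 1 ≤ c) (hn : Even n) (hlarge : 4 * c ≤ n + 2)
    (w : Fin n → ℕ) (W : ℝ) (hW : W = ∑ i, (w i : ℝ)) :
    ((∃ S : Finset (Fin n), 2 * S.card = n ∧ 2 * ∑ i ∈ S, (w i : ℝ) = W) →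
      ∃ alloc : Fin (n + 2 + c * n ^ 2) → Option (GadgetV n × GadgetV n),
        Feasible2PAA _ (gadgetBid c n w W) (gadgetBudget c n W) alloc ∧
        value2PAA _ (gadgetBid c n w W) (gadgetBudget c n W) alloc ≥
          c * W * ((n : ℝ) ^ 5 + n + 2)) ∧
    ((∃ alloc : Fin (n + 2 + c * n ^ 2) → Option (GadgetV n × GadgetV n),
        Feasible2PAA _ (gadgetBid c n w W) (gadgetBudget c n W) alloc ∧
        value2PAA _ (gadgetBid c n w W) (gadgetBudget c n W) alloc ≥
          c * W * ((n : ℝ) ^ 3 + c * (n : ℝ) ^ 2 + n + 2)) →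
      ∃ S : Finset (Fin n), 2 * S.card = n ∧ 2 * ∑ i ∈ S, (w i : ℝ) = W) :=
  stmt19_general c n hc hn w W hW
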